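/- Assume the classifier is consistent (L_{D_n} →_p L* with 0 < L* < 1) and m_n, n_train → ∞. Then √(m_n)·(L̂_{m_n} − L_{D_n}) converges in distribution to N(0, L*(1 − L*)). -/

import Mathlib

/-!
Characteristic functions replace the martingale argument. Conditionally on the training data, the
characteristic function of `√m (L̂ - L)` at `t` is `φ_L(t / √m) ^ m`, where `φ_p` is that of a centred
Bernoulli(`p`) variable (`CondIIDBernoulli.charFun_dev`). The second-order expansion of `φ_p` has a
remainder uniform in `p ∈ [0, 1]`, so this power is `exp (-t² L (1 - L) / 2) + O(m^(-1/2))` with a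
nonrandom error (`norm_bernChar_pow_sub_le`). Since `L → L*` in probability and the exponential is a
bounded continuous function of `L`, the expectations converge to `exp (-t² L* (1 - L*) / 2)`
(`tendsto_integral_bernChar`), and Lévy's continuity theorem concludes.

Neither the measurability of the errors nor `mD n ≤ m0`, for `m0` the ambient σ-algebra, is assumed:
both follow from the conditional i.i.d. identity as soon as `L n` is not almost surely in `{0, 1}`
(`CondIIDBernoulli.integrable_and_le`), which holds for large `n` because `0 < L* < 1`.
-/

open MeasureTheory ProbabilityTheory Filter
open scoped Topology Classical

/-- Conditionally i.i.d. Bernoulli(`L`) errors given the sub-σ-algebra `mD`. -/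
def CondIIDBernoulli {Ω : Type*} {m0 : MeasurableSpace Ω} (μ : Measure Ω)
    (mD : MeasurableSpace Ω) {m : ℕ} (ε : Fin m → Ω → Prop) (L : Ω → ℝ) : Prop :=
  ∀ b : Fin m → Bool,
    μ[Set.indicator {ω | ∀ i, ε i ω ↔ b i = true} (fun _ => (1 : ℝ)) | mD]
      =ᵐ[μ] fun ω => ∏ i, (if b i then L ω else 1 - L ω)

lemma norm_pow_sub_pow_le_mul (a b : ℂ) (ha : ‖a‖ ≤ 1) (hb : ‖b‖ ≤ 1) (k : ℕ) :
    ‖a ^ k - b ^ k‖ ≤ k * ‖a - b‖ := by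
  induction k with
  | zero => simp
  | succ k ih =>
    have h : a ^ (k + 1) - b ^ (k + 1) = a ^ k * (a - b) + (a ^ k - b ^ k) * b := by ring
    have ha' : ‖a‖ ^ k ≤ 1 := pow_le_one₀ (norm_nonneg _) ha
    rw [h]
    calc _ ≤ ‖a‖ ^ k * ‖a - b‖ + ‖a ^ k - b ^ k‖ * ‖b‖ := by
            grw [norm_add_le, norm_mul, norm_mul, norm_pow]
      _ ≤ 1 * ‖a - b‖ + (k * ‖a - b‖) * 1 := by gcongr
      _ = _ := by push_cast; ring

lemma norm_exp_mul_I_taylor_le {x s : ℝ} (hx : |x| ≤ |s|) (hs : |s| ≤ 1) :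
    ‖Complex.exp (x * Complex.I) - (1 + x * Complex.I - x ^ 2 / 2)‖ ≤ 3 * |s| ^ 3 := by
  have h := Complex.norm_exp_sub_sum_le_norm_mul_exp ((x : ℂ) * Complex.I) 3
  have hn : ‖(x : ℂ) * Complex.I‖ = |x| := by simp
  have hsum : ∑ k ∈ Finset.range 3, ((x : ℂ) * Complex.I) ^ k / (k.factorial : ℂ)
      = 1 + x * Complex.I - x ^ 2 / 2 := by
    simp [Finset.sum_range_succ, mul_pow, Nat.factorial]
    ring
  rw [hn, hsum] at h
  have he : Real.exp |x| ≤ 3 :=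
    (Real.exp_le_exp.2 (hx.trans hs)).trans (by linarith [Real.exp_one_lt_d9])
  calc _ ≤ |x| ^ 3 * Real.exp |x| := h
    _ ≤ |s| ^ 3 * 3 := by gcongr
    _ = _ := by ring

/-- The characteristic function at `s` of a centred Bernoulli(`p`) variable. -/
noncomputable def bernChar (p s : ℝ) : ℂ :=
  p * Complex.exp ((s * (1 - p) : ℝ) * Complex.I)
    + (1 - p) * Complex.exp ((s * (0 - p) : ℝ) * Complex.I)

lemma norm_bernChar_le {p : ℝ} (hp : p ∈ Set.Icc (0 : ℝ) 1) (s : ℝ) : ‖bernChar p s‖ ≤ 1 := by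
  unfold bernChar
  grw [norm_add_le, norm_mul, norm_mul, Complex.norm_exp_ofReal_mul_I, Complex.norm_exp_ofReal_mul_I]
  have : (1 - (p : ℂ)) = ((1 - p : ℝ) : ℂ) := by push_cast; rfl
  rw [this, Complex.norm_real, Complex.norm_real, Real.norm_of_nonneg hp.1,
    Real.norm_of_nonneg (sub_nonneg.2 hp.2)]
  linarith

/-- The second-order expansion of the centred Bernoulli characteristic function, with a remainder
that is uniform in the success probability. -/
lemma norm_bernChar_sub_le {p s : ℝ} (hp : p ∈ Set.Icc (0 : ℝ) 1) (hs : |s| ≤ 1) :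
    ‖bernChar p s - (Real.exp (-(s ^ 2 * (p * (1 - p)) / 2)) : ℝ)‖ ≤ 6 * |s| ^ 3 := by
  obtain ⟨hp0, hp1⟩ := hp
  have hq0 : 0 ≤ 1 - p := sub_nonneg.2 hp1
  have h1 : |s * (1 - p)| ≤ |s| := by
    rw [abs_mul, abs_of_nonneg hq0]; nlinarith [abs_nonneg s]
  have h2 : |s * (0 - p)| ≤ |s| := by
    rw [abs_mul, zero_sub, abs_neg, abs_of_nonneg hp0]; nlinarith [abs_nonneg s]
  have t1 := norm_exp_mul_I_taylor_le h1 hs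
  have t2 := norm_exp_mul_I_taylor_le h2 hs
  have hs2 : s ^ 2 ≤ 1 := by rw [← sq_abs]; exact pow_le_one₀ (abs_nonneg _) hs
  have hv0 : 0 ≤ p * (1 - p) := mul_nonneg hp0 hq0
  have hv1 : p * (1 - p) ≤ 1 := by nlinarith
  set y : ℝ := -(s ^ 2 * (p * (1 - p)) / 2) with hy
  have hyabs : |y| ≤ s ^ 2 := by
    rw [hy, abs_neg, abs_of_nonneg (by positivity)]; nlinarith [sq_nonneg s]
  have t3 : |Real.exp y - 1 - y| ≤ 3 * |s| ^ 3 := by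
    refine (Real.norm_exp_sub_one_sub_id_le (x := y) (hyabs.trans hs2)).trans ?_
    rw [Real.norm_eq_abs]
    calc |y| ^ 2 ≤ (s ^ 2) ^ 2 := by gcongr
      _ = |s| ^ 3 * |s| := by rw [← sq_abs s]; ring
      _ ≤ |s| ^ 3 * 1 := by gcongr
      _ ≤ 3 * |s| ^ 3 := by linarith [pow_nonneg (abs_nonneg s) 3]
  have key : bernChar p s - (Real.exp y : ℝ)
      = (p : ℝ) * (Complex.exp ((s * (1 - p) : ℝ) * Complex.I)
          - (1 + (s * (1 - p) : ℝ) * Complex.I - ((s * (1 - p) : ℝ) : ℂ) ^ 2 / 2))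
        + (1 - p : ℝ) * (Complex.exp ((s * (0 - p) : ℝ) * Complex.I)
          - (1 + (s * (0 - p) : ℝ) * Complex.I - ((s * (0 - p) : ℝ) : ℂ) ^ 2 / 2))
        - ((Real.exp y - 1 - y : ℝ) : ℂ) := by
    rw [bernChar, hy]; push_cast; ring
  rw [key]
  grw [norm_sub_le, norm_add_le, norm_mul, norm_mul, t1, t2]
  rw [Complex.norm_real, Complex.norm_real, Complex.norm_real, Real.norm_of_nonneg hp0,
    Real.norm_of_nonneg hq0, Real.norm_eq_abs]
  linarith

/-- The characteristic function of a sum of `k` independent centred Bernoulli(`p`) variables, divided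
by `√k`, is within `O(k^(-1/2))` of that of `N(0, p (1 - p))`, uniformly in `p ∈ [0, 1]`. -/
lemma norm_bernChar_pow_sub_le {p t : ℝ} (hp : p ∈ Set.Icc (0 : ℝ) 1) {k : ℕ} (hk : 0 < k)
    (ht : |t / √k| ≤ 1) :
    ‖bernChar p (t / √k) ^ k - (Real.exp (-(t ^ 2 / 2) * |p * (1 - p)|) : ℝ)‖
      ≤ 6 * |t| ^ 3 / √k := by
  have hk' : (0 : ℝ) < k := by exact_mod_cast hk
  have hsq : √(k : ℝ) ^ 2 = k := Real.sq_sqrt hk'.le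
  have hpos : 0 < √(k : ℝ) := Real.sqrt_pos.2 hk'
  have hv0 : 0 ≤ p * (1 - p) := mul_nonneg hp.1 (sub_nonneg.2 hp.2)
  have hb : (Real.exp (-(t ^ 2 / 2) * |p * (1 - p)|) : ℝ)
      = Real.exp (-((t / √k) ^ 2 * (p * (1 - p)) / 2)) ^ k := by
    rw [← Real.exp_nat_mul, abs_of_nonneg hv0, div_pow, hsq]
    congr 1
    field_simp
  rw [hb, Complex.ofReal_pow]
  refine (norm_pow_sub_pow_le_mul _ _ (norm_bernChar_le hp _) ?_ k).trans ?_
  · rw [Complex.norm_real, Real.norm_of_nonneg (Real.exp_nonneg _)]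
    refine Real.exp_le_one_iff.2 (neg_nonpos.2 (by positivity))
  · grw [norm_bernChar_sub_le hp ht]
    rw [abs_div, abs_of_pos hpos, div_pow]
    apply le_of_eq
    have h3 : √(k : ℝ) ^ 3 = k * √(k : ℝ) := by rw [pow_succ, hsq]
    rw [h3]
    field_simp

/-- The normalised deviation `√m (m⁻¹ ∑ bᵢ - l)` as a function of the error pattern `b` and of the
success probability `l`. -/
noncomputable def dev {m : ℕ} (b : Fin m → Bool) (l : ℝ) : ℝ :=
  √m * ((1 / m : ℝ) * (∑ i, if b i then (1 : ℝ) else 0) - l)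

lemma dev_eq_sum {m : ℕ} (hm : 0 < m) (b : Fin m → Bool) (l t : ℝ) :
    t * dev b l = ∑ i, t / √m * ((if b i then (1 : ℝ) else 0) - l) := by
  have hk' : (0 : ℝ) < m := by exact_mod_cast hm
  have hsq : √(m : ℝ) ^ 2 = m := Real.sq_sqrt hk'.le
  have hpos : 0 < √(m : ℝ) := Real.sqrt_pos.2 hk'
  rw [← Finset.mul_sum, Finset.sum_sub_distrib, dev]
  simp only [Finset.sum_const, Finset.card_univ, Fintype.card_fin, nsmul_eq_mul]
  field_simp
  rw [hsq]

/-- Averaging over independent Bernoulli(`l`) errors factorises the characteristic function. -/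
lemma sum_prod_smul_exp {m : ℕ} (hm : 0 < m) (l t : ℝ) :
    ∑ b : Fin m → Bool, (∏ i, (if b i then l else 1 - l)) •
      Complex.exp ((t * dev b l : ℝ) * Complex.I) = bernChar l (t / √m) ^ m := by
  have h (b : Fin m → Bool) : (∏ i, (if b i then l else 1 - l)) •
      Complex.exp ((t * dev b l : ℝ) * Complex.I)
      = ∏ i, (((if b i then l else 1 - l : ℝ) : ℂ) *
        Complex.exp ((t / √m * ((if b i then (1 : ℝ) else 0) - l) : ℝ) * Complex.I)) := by
    rw [dev_eq_sum hm, Finset.prod_mul_distrib, ← Complex.exp_sum, ← Finset.sum_mul,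
      ← Complex.ofReal_sum, ← Complex.ofReal_prod, Complex.real_smul]
  simp_rw [h]
  rw [← Fintype.prod_sum (fun (_ : Fin m) (c : Bool) => (((if c then l else 1 - l : ℝ) : ℂ) *
        Complex.exp ((t / √m * ((if c then (1 : ℝ) else 0) - l) : ℝ) * Complex.I)))]
  simp [bernChar]

section Cond

variable {Ω : Type*} {mD : MeasurableSpace Ω} {m0 : MeasurableSpace Ω} {μ : Measure Ω} {m : ℕ} {ε : Fin m → Ω → Prop} {L : Ω → ℝ}

/-- The error patterns partition `Ω`, so any function of the pattern is a combination of
indicators. -/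
lemma sum_indicator_smul {E : Type*} [AddCommGroup E] [Module ℝ E] (ε : Fin m → Ω → Prop)
    (H : (Fin m → Bool) → E) (ω : Ω) :
    ∑ b, Set.indicator {ω | ∀ i, ε i ω ↔ b i = true} (fun _ => (1 : ℝ)) ω • H b
      = H (fun i => decide (ε i ω)) := by
  rw [Finset.sum_eq_single (fun i => decide (ε i ω))]
  · simp
  · intro b _ hb
    rw [Set.indicator_of_notMem, zero_smul]
    intro h
    apply hb
    funext i
    have := h i
    by_cases hi : ε i ω <;> simp_all
  · simp

/-- `μ[· | mD]` is `0` when `mD` is not a sub-σ-algebra or the function is not integrable, whereas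
the products in the defining identity are positive where `0 < L < 1`. Hence the identity itself
forces `mD ≤ m0` and the measurability of the error patterns, unless `L ∈ {0, 1}` almost surely. -/
lemma CondIIDBernoulli.integrable_and_le (h : CondIIDBernoulli μ mD ε L)
    (hL : ∃ᵐ ω ∂μ, 0 < L ω ∧ L ω < 1) :
    mD ≤ m0 ∧ ∀ b : Fin m → Bool,
      Integrable (Set.indicator {ω | ∀ i, ε i ω ↔ b i = true} (fun _ => (1 : ℝ))) μ := by
  have key (b : Fin m → Bool)
      (h0 : μ[Set.indicator {ω | ∀ i, ε i ω ↔ b i = true} (fun _ => (1 : ℝ)) | mD] = 0) :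
      False := by
    have h1 := h b
    rw [h0] at h1
    obtain ⟨ω, ⟨hω, hω'⟩, h2⟩ := (hL.and_eventually h1).exists
    have : 0 < ∏ i, (if b i then L ω else 1 - L ω) :=
      Finset.prod_pos fun i _ => by split_ifs <;> linarith
    simp only [Pi.zero_apply] at h2
    linarith
  refine ⟨?_, fun b => ?_⟩
  · by_contra hle
    exact key (fun _ => true) (condExp_of_not_le hle)
  · by_contra hint
    exact key b (condExp_of_not_integrable hint)

/-- `L` is measurable with respect to the training data, being the `m`-th root of the conditional
probability that all errors occur. -/
lemma CondIIDBernoulli.aestronglyMeasurable (h : CondIIDBernoulli μ mD ε L) (hm : 0 < m)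
    (hLbd : ∀ ω, L ω ∈ Set.Icc (0 : ℝ) 1) : AEStronglyMeasurable[mD] L μ := by
  have h1 : AEStronglyMeasurable[mD] (fun ω => L ω ^ m) μ :=
    (stronglyMeasurable_condExp.aestronglyMeasurable).congr
      ((h fun _ => true).trans (by simp))
  have h2 := (Real.continuous_rpow_const (q := (m : ℝ)⁻¹) (by positivity)).comp_aestronglyMeasurable
    h1
  refine h2.congr (Eventually.of_forall fun ω => ?_)
  exact Real.pow_rpow_inv_natCast (hLbd ω).1 (Nat.pos_iff_ne_zero.1 hm)

/-- Functions of the errors and of the success probability may be averaged over independent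
Bernoulli(`L`) errors under the integral. -/
lemma CondIIDBernoulli.integral_eq [IsFiniteMeasure μ] (h : CondIIDBernoulli μ mD ε L) (hle : mD ≤ m0)
    (hint : ∀ b : Fin m → Bool,
      Integrable (Set.indicator {ω | ∀ i, ε i ω ↔ b i = true} (fun _ => (1 : ℝ))) μ)
    (hLm : AEStronglyMeasurable[mD] L μ) (F : (Fin m → Bool) → ℝ → ℂ)
    (hF : ∀ b, Continuous (F b)) (hF1 : ∀ b x, ‖F b x‖ ≤ 1) :
    ∫ ω, F (fun i => decide (ε i ω)) (L ω) ∂μ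
      = ∫ ω, ∑ b, (∏ i, (if b i then L ω else 1 - L ω)) • F b (L ω) ∂μ := by
  have hG (b) : AEStronglyMeasurable[mD] (fun ω => F b (L ω)) μ :=
    (hF b).comp_aestronglyMeasurable hLm
  have hI (b) : Integrable ((Set.indicator {ω | ∀ i, ε i ω ↔ b i = true} (fun _ => (1 : ℝ))) •
      fun ω => F b (L ω)) μ := by
    refine (hint b).smul_bdd 1 ((hG b).mono hle) (Eventually.of_forall fun ω => hF1 b _)
  have hae (b) : μ[(Set.indicator {ω | ∀ i, ε i ω ↔ b i = true} (fun _ => (1 : ℝ))) •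
      (fun ω => F b (L ω)) | mD]
      =ᵐ[μ] fun ω => (∏ i, (if b i then L ω else 1 - L ω)) • F b (L ω) := by
    refine (condExp_smul_of_aestronglyMeasurable_right (hint b) (hI b) (hG b)).trans ?_
    filter_upwards [h b] with ω hω
    simp only [Pi.smul_apply', hω]
  have hI' (b) : Integrable
      (fun ω => (∏ i, (if b i then L ω else 1 - L ω)) • F b (L ω)) μ :=
    integrable_condExp.congr (hae b)
  rw [integral_finsetSum _ fun b _ => hI' b]
  rw [integral_congr_ae (Eventually.of_forall fun ω =>
    (sum_indicator_smul ε (fun b => F b (L ω)) ω).symm)]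
  refine (integral_finsetSum _ fun b _ => hI b).trans ?_
  refine Finset.sum_congr rfl fun b _ => ?_
  rw [← integral_congr_ae (hae b), integral_condExp hle]

lemma aemeasurable_dev (hint : ∀ b : Fin m → Bool,
      Integrable (Set.indicator {ω | ∀ i, ε i ω ↔ b i = true} (fun _ => (1 : ℝ))) μ)
    (hL : Measurable L) : AEMeasurable (fun ω => dev (fun i => decide (ε i ω)) (L ω)) μ := by
  have hsum (ω : Ω) := sum_indicator_smul ε (fun b => dev b (L ω)) ω
  simp_rw [← hsum]
  refine Finset.aemeasurable_fun_sum _ fun b _ => ?_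
  refine (hint b).aemeasurable.smul ?_
  unfold dev
  fun_prop

lemma CondIIDBernoulli.charFun_dev [IsFiniteMeasure μ] (h : CondIIDBernoulli μ mD ε L)
    (hL : ∃ᵐ ω ∂μ, 0 < L ω ∧ L ω < 1) (hm : 0 < m)
    (hLbd : ∀ ω, L ω ∈ Set.Icc (0 : ℝ) 1) (hLm : Measurable L) (t : ℝ) :
    charFun (μ.map fun ω => dev (fun i => decide (ε i ω)) (L ω)) t
      = ∫ ω, bernChar (L ω) (t / √m) ^ m ∂μ := by
  obtain ⟨hle, hint⟩ := h.integrable_and_le hL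
  rw [charFun_apply_real, integral_map (aemeasurable_dev hint hLm)
    (Continuous.aestronglyMeasurable (by fun_prop))]
  simp_rw [← sum_prod_smul_exp hm]
  rw [← h.integral_eq hle hint (h.aestronglyMeasurable hm hLbd)
    (fun b l => Complex.exp ((t * dev b l : ℝ) * Complex.I)) ?_ ?_]
  · simp
  · intro b
    unfold dev
    fun_prop
  · intro b x
    rw [Complex.norm_exp_ofReal_mul_I]

end Cond

lemma tendsto_integral_bernChar {Ω : Type*} [MeasurableSpace Ω] {μ : Measure Ω}
    [IsProbabilityMeasure μ] {m : ℕ → ℕ} {L : ℕ → Ω → ℝ} {Lstar : ℝ}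
    (hLmeas : ∀ n, Measurable (L n)) (hLbd : ∀ n ω, L n ω ∈ Set.Icc (0 : ℝ) 1)
    (hm : Tendsto m atTop atTop)
    (hcons : ∀ δ : ℝ, 0 < δ → Tendsto (fun n => μ {ω | |L n ω - Lstar| > δ}) atTop (𝓝 0))
    (t : ℝ) :
    Tendsto (fun n => ∫ ω, bernChar (L n ω) (t / √(m n)) ^ (m n) ∂μ) atTop
      (𝓝 ((Real.exp (-(t ^ 2 / 2) * |Lstar * (1 - Lstar)|) : ℝ) : ℂ)) := by
  have hsqrt : Tendsto (fun n => √(m n : ℝ)) atTop atTop :=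
    Real.tendsto_sqrt_atTop.comp (tendsto_natCast_atTop_atTop.comp hm)
  have hprob : TendstoInMeasure μ L atTop fun _ => Lstar := by
    rw [tendstoInMeasure_iff_norm]
    intro δ hδ
    refine tendsto_of_tendsto_of_tendsto_of_le_of_le tendsto_const_nhds (hcons (δ / 2) (half_pos hδ))
      (fun _ => zero_le) fun n => measure_mono fun ω hω => ?_
    simp only [Set.mem_ofPred_eq, Real.norm_eq_abs] at hω ⊢
    linarith
  -- The absolute value makes this function bounded on all of `ℝ`, without changing it on `[0, 1]`.
  let ψ : BoundedContinuousFunction ℝ ℝ := BoundedContinuousFunction.ofNormedAddCommGroup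
    (fun x => Real.exp (-(t ^ 2 / 2) * |x * (1 - x)|)) (by fun_prop) 1 fun x => by
      rw [Real.norm_of_nonneg (Real.exp_nonneg _), Real.exp_le_one_iff, neg_mul]
      exact neg_nonpos.2 (by positivity)
  have hψ : Tendsto (fun n => ∫ ω, ψ (L n ω) ∂μ) atTop (𝓝 (ψ Lstar)) := by
    have h1 := (hprob.tendstoInDistribution fun n => (hLmeas n).aemeasurable).tendsto
    have h2 := ProbabilityMeasure.tendsto_iff_forall_integral_tendsto.1 h1 ψ
    have h3 (n) : ∫ x, ψ x ∂(μ.map (L n)) = ∫ ω, ψ (L n ω) ∂μ :=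
      integral_map (hLmeas n).aemeasurable ψ.continuous.aestronglyMeasurable
    simpa [h3] using h2
  have hψ' : Tendsto (fun n => ((∫ ω, ψ (L n ω) ∂μ : ℝ) : ℂ)) atTop (𝓝 ((ψ Lstar : ℝ) : ℂ)) :=
    (Complex.continuous_ofReal.tendsto _).comp hψ
  have hdiff : Tendsto (fun n => (∫ ω, bernChar (L n ω) (t / √(m n)) ^ (m n) ∂μ)
      - ((∫ ω, ψ (L n ω) ∂μ : ℝ) : ℂ)) atTop (𝓝 0) := by
    refine squeeze_zero_norm' ?_ ((tendsto_const_nhds (x := 6 * |t| ^ 3)).div_atTop hsqrt)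
    filter_upwards [hm.eventually_gt_atTop 0, hsqrt.eventually_ge_atTop (|t|),
      hsqrt.eventually_gt_atTop 0] with n hn hn1 hn2
    have ht : |t / √(m n)| ≤ 1 := by
      rw [abs_div, abs_of_pos hn2]
      exact (div_le_one hn2).2 hn1
    have hLn := hLmeas n
    rw [← integral_complex_ofReal, ← integral_sub]
    · refine (norm_integral_le_of_norm_le_const (μ := μ) (C := 6 * |t| ^ 3 / √(m n))
        (Eventually.of_forall fun ω => norm_bernChar_pow_sub_le (hLbd n ω) hn ht)).trans ?_
      simp
    · refine Integrable.of_bound (C := 1) ?_ (Eventually.of_forall fun ω => ?_)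
      · unfold bernChar
        exact Measurable.aestronglyMeasurable (by fun_prop)
      · rw [norm_pow]
        exact pow_le_one₀ (norm_nonneg _) (norm_bernChar_le (hLbd n ω) _)
    · refine Integrable.of_bound (C := ‖ψ‖)
        (Complex.continuous_ofReal.comp ψ.continuous |>.measurable.comp hLn).aestronglyMeasurable
        (Eventually.of_forall fun ω => ?_)
      rw [Complex.norm_real]
      exact ψ.norm_coe_le_norm _
  have h := hdiff.add hψ'
  simp only [sub_add_cancel, zero_add] at h
  exact h

/-- Consistency with a limit in `(0, 1)` rules out, from some rank on, that `L n ∈ {0, 1}` almost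
surely. -/
lemma eventually_frequently_mem_Ioo {Ω : Type*} [MeasurableSpace Ω] {μ : Measure Ω}
    [IsProbabilityMeasure μ] {L : ℕ → Ω → ℝ} {Lstar : ℝ}
    (hcons : ∀ δ : ℝ, 0 < δ → Tendsto (fun n => μ {ω | |L n ω - Lstar| > δ}) atTop (𝓝 0))
    (h0 : 0 < Lstar) (h1 : Lstar < 1) :
    ∀ᶠ n in atTop, ∃ᵐ ω ∂μ, 0 < L n ω ∧ L n ω < 1 := by
  have hδ : 0 < min Lstar (1 - Lstar) / 2 := half_pos (lt_min h0 (sub_pos.2 h1))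
  filter_upwards [(hcons _ hδ).eventually_lt_const one_pos] with n hn
  intro hae
  refine hn.ne ?_
  rw [← measure_univ (μ := μ)]
  refine measure_congr (eventuallyEq_univ.2 ?_)
  filter_upwards [hae] with ω hω
  by_contra hlt
  have hle : |L n ω - Lstar| ≤ min Lstar (1 - Lstar) / 2 := not_lt.1 hlt
  have := abs_le.1 hle
  have := min_le_left Lstar (1 - Lstar)
  have := min_le_right Lstar (1 - Lstar)
  exact hω ⟨by linarith, by linarith⟩

/-- Martingale CLT for the test error: if the classifier is consistent
(`L_{D_n} →_p L*`, `0 < L* < 1`) and the test errors are conditionally i.i.d.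
Bernoulli(`L_{D_n}`) given the training data, then
`√(m_n) (L̂_{m_n} − L_{D_n})` converges in distribution to `N(0, L*(1 − L*))`
(convergence in distribution is expressed via bounded continuous test functions). -/
theorem sqrt_mn_error_clt
    {Ω : Type*} [MeasurableSpace Ω] (μ : Measure Ω) [IsProbabilityMeasure μ]
    (m : ℕ → ℕ) (mD : ℕ → MeasurableSpace Ω)
    (ε : ∀ n, Fin (m n) → Ω → Prop) (L : ℕ → Ω → ℝ) (Lstar : ℝ)
    (hcond : ∀ n, CondIIDBernoulli μ (mD n) (ε n) (L n))
    (hLmeas : ∀ n, Measurable (L n))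
    (hLbd : ∀ n ω, L n ω ∈ Set.Icc (0 : ℝ) 1)
    (hm : Tendsto m atTop atTop)
    (hcons : ∀ δ : ℝ, 0 < δ →
      Tendsto (fun n => μ {ω | |L n ω - Lstar| > δ}) atTop (𝓝 0))
    (h0 : 0 < Lstar) (h1 : Lstar < 1) :
    ∀ f : BoundedContinuousFunction ℝ ℝ,
      Tendsto (fun n => ∫ ω, f (Real.sqrt (m n) *
            ((1 / (m n) : ℝ) * (∑ i, if ε n i ω then (1 : ℝ) else 0) - L n ω)) ∂μ)
        atTop
        (𝓝 (∫ x, f x ∂(gaussianReal 0 (Real.toNNReal (Lstar * (1 - Lstar)))))) := by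
  intro f
  have hX (n) (ω) : Real.sqrt (m n) *
      ((1 / (m n) : ℝ) * (∑ i, if ε n i ω then (1 : ℝ) else 0) - L n ω)
      = dev (fun i => decide (ε n i ω)) (L n ω) := by
    simp [dev]
  simp_rw [hX]
  obtain ⟨N, hN⟩ := eventually_atTop.1
    ((eventually_frequently_mem_Ioo hcons h0 h1).and (hm.eventually_gt_atTop 0))
  -- Measurability of the errors is only available from the rank `N` on.
  rw [← tendsto_add_atTop_iff_nat N]
  have hN' (n : ℕ) := hN (n + N) (Nat.le_add_left N n)
  have hmeas (n : ℕ) :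
      AEMeasurable (fun ω => dev (fun i => decide (ε (n + N) i ω)) (L (n + N) ω)) μ :=
    aemeasurable_dev ((hcond _).integrable_and_le (hN' n).1).2 (hLmeas _)
  let ν (n : ℕ) : ProbabilityMeasure ℝ :=
    ⟨μ.map fun ω => dev (fun i => decide (ε (n + N) i ω)) (L (n + N) ω),
      Measure.isProbabilityMeasure_map (hmeas n)⟩
  let γ : ProbabilityMeasure ℝ :=
    ⟨gaussianReal 0 (Real.toNNReal (Lstar * (1 - Lstar))), inferInstance⟩
  have hν : Tendsto ν atTop (𝓝 γ) := by
    refine ProbabilityMeasure.tendsto_of_tendsto_charFun fun t => ?_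
    have hv : 0 ≤ Lstar * (1 - Lstar) := mul_nonneg h0.le (sub_pos.2 h1).le
    have hγ : charFun (γ : Measure ℝ) t
        = ((Real.exp (-(t ^ 2 / 2) * |Lstar * (1 - Lstar)|) : ℝ) : ℂ) := by
      simp only [γ, ProbabilityMeasure.coe_mk, charFun_gaussianReal, Real.coe_toNNReal _ hv,
        abs_of_nonneg hv]
      push_cast
      congr 1
      ring
    rw [hγ]
    refine ((tendsto_add_atTop_iff_nat N).2
      (tendsto_integral_bernChar hLmeas hLbd hm hcons t)).congr fun n => ?_
    exact ((hcond _).charFun_dev (hN' n).1 (hN' n).2 (hLbd _) (hLmeas _) t).symm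
  refine (ProbabilityMeasure.tendsto_iff_forall_integral_tendsto.1 hν f).congr fun n => ?_
  exact integral_map (hmeas n) f.continuous.aestronglyMeasurable
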